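/- Let C ⊆ ℤ² be finite, D = ⋃_{c ∈ C} cell(c), and S, T ⊆ C with |S| = |T| = n. If there exists any valid movement schedule (a finite sequence of moves, each move continuously translating a single unit square inside D while its interior stays disjoint from all other squares' cells) transforming the configuration with squares at the points of S into a configuration whose set of positions is exactly T, then there exists such a valid movement schedule in which each square moves at most once. -/

import Mathlib

/-- The closed axis-aligned unit square with bottom-left corner `x`. -/
def cell (x : ℝ × ℝ) : Set (ℝ × ℝ) := Set.Icc x.1 (x.1 + 1) ×ˢ Set.Icc x.2 (x.2 + 1)

/-- The canonical embedding of an integer grid point into the plane. -/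
def toR2 (p : ℤ × ℤ) : ℝ × ℝ := ((p.1 : ℝ), (p.2 : ℝ))

/-- A single valid move of square `i` inside the domain `D`: square `i` translates along a
continuous path `γ`, all other squares stay put, and at every time the moving square's
cell stays inside `D` and its interior is disjoint from every other square's cell. -/
def MoveOf (n : ℕ) (D : Set (ℝ × ℝ)) (i : Fin n) (c c' : Fin n → ℝ × ℝ) : Prop :=
  (∀ j : Fin n, j ≠ i → c' j = c j) ∧
    ∃ γ : ℝ → ℝ × ℝ, ContinuousOn γ (Set.Icc 0 1) ∧ γ 0 = c i ∧ γ 1 = c' i ∧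
      ∀ u ∈ Set.Icc (0 : ℝ) 1, cell (γ u) ⊆ D ∧
        ∀ j : Fin n, j ≠ i → interior (cell (γ u)) ∩ cell (c j) = ∅

/-- A single valid move (of some square) inside the domain `D`. -/
def Move (n : ℕ) (D : Set (ℝ × ℝ)) (c c' : Fin n → ℝ × ℝ) : Prop :=
  ∃ i : Fin n, MoveOf n D i c c'

open scoped Topology

/-!
In the sup metric, the unit squares at `x` and `y` overlap iff `dist x y < 1`. A square moving
inside the cells of `C` only ever overlaps cells of a single component of the grid graph on `C`, so
an arbitrary schedule matches every start point with a target in its own component. What remains is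
a statement about chips sliding along walks in a graph, proved by deleting one non-cut vertex `v` at
a time. If `v` is both occupied and a target, or neither, the rest of the graph is solved without
it. If `v` is a target but empty, the first chip met when walking backwards from `v` moves there
once and for all. If `v` is occupied but not a target, reverse time. Finally, every chip move is
realized by a square translating along the grid segments of the walk.
-/

/-- `Schedule M l c c'`: the labelled steps `M i`, carried out for the labels `i` in the list `l` in
order, lead from `c` to `c'`. The schedule is monotone when `l` has no duplicates. -/
inductive Schedule {ι X : Type*} (M : ι → X → X → Prop) : List ι → X → X → Prop
  | nil (c : X) : Schedule M [] c c
  | cons {i : ι} {l : List ι} {c₀ c₁ c₂ : X} (step : M i c₀ c₁) (rest : Schedule M l c₁ c₂) :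
      Schedule M (i :: l) c₀ c₂

namespace Schedule

variable {ι κ X Y : Type*} {M : ι → X → X → Prop} {l : List ι} {c c₀ c₁ c' : X}

theorem concat {i : ι} (h : Schedule M l c₀ c₁) (step : M i c₁ c') :
    Schedule M (l ++ [i]) c₀ c' := by
  induction h with
  | nil c => exact .cons step (.nil _)
  | cons first _ ih => exact .cons first (ih step)

theorem reverse (hM : ∀ i c c', M i c c' → M i c' c) (h : Schedule M l c c') :
    Schedule M l.reverse c' c := by
  induction h with
  | nil c => exact .nil c
  | cons step _ ih =>
    rw [List.reverse_cons]
    exact ih.concat (hM _ _ _ step)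

theorem map {M' : κ → Y → Y → Prop} (g : ι → κ) (f : X → Y)
    (hfg : ∀ i c c', M i c c' → M' (g i) (f c) (f c')) (h : Schedule M l c c') :
    Schedule M' (l.map g) (f c) (f c') := by
  induction h with
  | nil c => exact .nil _
  | cons step _ ih => exact .cons (hfg _ _ _ step) ih

theorem exists_fin_sequence (h : Schedule M l c c') :
    ∃ cs : Fin (l.length + 1) → X, cs 0 = c ∧ cs (Fin.last l.length) = c' ∧
      ∀ k : Fin l.length, M (l.get k) (cs k.castSucc) (cs k.succ) := by
  induction h with
  | nil c => exact ⟨fun _ ↦ c, rfl, rfl, fun k ↦ k.elim0⟩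
  | @cons i l c₀ c₁ c₂ step _ ih =>
    obtain ⟨cs, rfl, rfl, steps⟩ := ih
    refine ⟨Fin.cons c₀ cs, rfl, ?_, Fin.cases step steps⟩
    exact Fin.cons_succ (α := fun _ ↦ X) c₀ cs (Fin.last l.length)

end Schedule

section Graph

variable {V ι : Type*} {G H : SimpleGraph V}

theorem reachable_deleteIncidenceSet_of_notMem_support {u v w : V} (p : G.Walk u w)
    (hv : v ∉ p.support) : (G.deleteIncidenceSet v).Reachable u w := by
  refine ⟨p.transfer _ fun e he ↦ ?_⟩
  rw [SimpleGraph.edgeSet_deleteIncidenceSet]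
  refine ⟨p.edges_subset_edgeSet he, fun hve ↦ hv ?_⟩
  exact p.mem_support_of_mem_edges he hve.2

/-- Deleting `v` does not disconnect any two other vertices of `G`. -/
def IsNonCutVertex (G : SimpleGraph V) (v : V) : Prop :=
  ∀ ⦃a b : V⦄, a ≠ v → b ≠ v → G.Reachable a b → (G.deleteIncidenceSet v).Reachable a b

-- A shortest path from `r` only passes through vertices closer to `r` than its endpoint.
theorem isNonCutVertex_of_dist_le {r v : V} (hrv : G.Reachable r v)
    (hmax : ∀ w, G.Reachable r w → G.dist r w ≤ G.dist r v) : IsNonCutVertex G v := by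
  classical
  have from_root {w : V} (hw : w ≠ v) (hrw : G.Reachable r w) :
      (G.deleteIncidenceSet v).Reachable r w := by
    obtain ⟨p, hp⟩ := hrw.exists_walk_length_eq_dist
    refine reachable_deleteIncidenceSet_of_notMem_support p fun hvp ↦ ?_
    have shorter : (p.takeUntil v hvp).length < p.length := p.length_takeUntil_lt_length hvp hw.symm
    have := SimpleGraph.dist_le (p.takeUntil v hvp)
    have := hmax w hrw
    lia
  intro a b ha hb hab
  by_cases hra : G.Reachable r a
  · exact (from_root ha hra).symm.trans (from_root hb (hra.trans hab))
  · obtain ⟨p⟩ := hab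
    refine reachable_deleteIncidenceSet_of_notMem_support p fun hvp ↦ hra ?_
    exact hrv.trans (p.takeUntil v hvp).reachable.symm

theorem exists_mem_support_isNonCutVertex (hfin : G.support.Finite) (hG : G ≠ ⊥) :
    ∃ v ∈ G.support, IsNonCutVertex G v := by
  obtain ⟨r, s, hrs⟩ := SimpleGraph.ne_bot_iff_exists_adj.1 hG
  obtain ⟨v, ⟨hv, hrv⟩, hmax⟩ := Set.exists_max_image {w ∈ G.support | G.Reachable r w} (G.dist r)
    (hfin.subset fun _ hw ↦ hw.1) ⟨r, ⟨s, hrs⟩, .rfl⟩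
  refine ⟨v, hv, isNonCutVertex_of_dist_le hrv fun w hrw ↦ ?_⟩
  rcases eq_or_ne w r with rfl | hwr
  · simp
  · exact hmax w ⟨SimpleGraph.mem_support_of_reachable hwr hrw.symm, hrw⟩

theorem exists_walk_forall_mem_support_eq {A : Set V} {u w : V} (p : G.Walk u w)
    (hA : ∃ x ∈ p.support, x ∈ A) :
    ∃ a ∈ A, ∃ q : G.Walk a w, ∀ x ∈ q.support, x ∈ A → x = a := by
  induction p with
  | nil =>
    obtain ⟨x, hx, hxA⟩ := hA
    obtain rfl := List.mem_singleton.1 hx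
    exact ⟨x, hxA, .nil, fun y hy _ ↦ List.mem_singleton.1 hy⟩
  | @cons u v w huv p ih =>
    by_cases hp : ∃ x ∈ p.support, x ∈ A
    · exact ih hp
    · push Not at hp
      obtain ⟨x, hx, hxA⟩ := hA
      obtain rfl := (List.mem_cons.1 hx).resolve_right fun h ↦ hp x h hxA
      exact ⟨x, hxA, .cons huv p, fun y hy hyA ↦ (List.mem_cons.1 hy).resolve_right
        fun h ↦ hp y h hyA⟩

theorem exists_finset_reachable [Finite ι] {c τ : ι → V} (h : ∀ i, G.Reachable (c i) (τ i)) :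
    ∃ W : Finset V, ∀ i, (G.induce (W : Set V)).spanningCoe.Reachable (c i) (τ i) := by
  classical
  have := Fintype.ofFinite ι
  let p i := (h i).some
  let W : Finset V := Finset.univ.biUnion fun i ↦ (p i).support.toFinset
  have support_subset (i : ι) (x : V) (hx : x ∈ (p i).support) : x ∈ (W : Set V) :=
    Finset.mem_biUnion.2 ⟨i, Finset.mem_univ i, List.mem_toFinset.2 hx⟩
  exact ⟨W, fun i ↦ ((p i).induce W (support_subset i)).reachable.map
    (SimpleGraph.Embedding.spanningCoe _).toHom⟩

/-- Chip `i` slides from `c i` to a different vertex along a walk avoiding all other chips. -/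
def ChipMove (G : SimpleGraph V) (i : ι) (c c' : ι → V) : Prop :=
  c' i ≠ c i ∧ (∀ j ≠ i, c' j = c j) ∧ ∃ p : G.Walk (c i) (c' i), ∀ j ≠ i, c j ∉ p.support

namespace ChipMove

variable {i : ι} {c c' : ι → V}

theorem mono (hGH : G ≤ H) (h : ChipMove G i c c') : ChipMove H i c c' := by
  obtain ⟨hne, hstay, p, hp⟩ := h
  exact ⟨hne, hstay, p.mapLe hGH, fun j hj ↦ by simpa using hp j hj⟩

theorem symm (h : ChipMove G i c c') : ChipMove G i c' c := by
  obtain ⟨hne, hstay, p, hp⟩ := h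
  refine ⟨hne.symm, fun j hj ↦ (hstay j hj).symm, p.reverse, fun j hj ↦ ?_⟩
  simpa [hstay j hj] using hp j hj

theorem relabel (σ : Equiv.Perm ι) (h : ChipMove G i c c') :
    ChipMove G (σ i) (c ∘ σ.symm) (c' ∘ σ.symm) := by
  obtain ⟨hne, hstay, p, hp⟩ := h
  have symm_ne {j : ι} (hj : j ≠ σ i) : σ.symm j ≠ i := fun h ↦ hj (σ.symm_apply_eq.1 h)
  refine ⟨by simpa using hne, fun j hj ↦ hstay _ (symm_ne hj),
    p.copy (by simp) (by simp), fun j hj ↦ ?_⟩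
  simpa using hp _ (symm_ne hj)

theorem mem_support (h : ChipMove G i c c') : c i ∈ G.support := by
  obtain ⟨hne, -, p, -⟩ := h
  exact SimpleGraph.mem_support_of_reachable hne.symm p.reachable

theorem reachable (h : ChipMove G i c c') (k : ι) : G.Reachable (c k) (c' k) := by
  obtain ⟨-, hstay, p, -⟩ := h
  by_cases hk : k = i
  · exact hk ▸ p.reachable
  · rw [hstay k hk]

theorem injective (h : ChipMove G i c c') (hc : c.Injective) : c'.Injective := by
  obtain ⟨-, hstay, p, hp⟩ := h
  have hi {j : ι} (hj : j ≠ i) : c' j ≠ c' i := fun h ↦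
    hp j hj (by rw [← hstay j hj, h]; exact p.end_mem_support)
  intro j k hjk
  by_cases hj : j = i <;> by_cases hk : k = i
  · rw [hj, hk]
  · exact absurd (hj ▸ hjk.symm) (hi hk)
  · exact absurd (hk ▸ hjk) (hi hj)
  · exact hc (by rw [← hstay j hj, ← hstay k hk, hjk])

end ChipMove

theorem notMem_of_schedule_chipMove {l : List ι} {c c' : ι → V} {i : ι}
    (h : Schedule (ChipMove G) l c c') (hi : c i ∉ G.support) : i ∉ l := by
  induction h with
  | nil c => exact List.not_mem_nil
  | @cons k l c₀ c₁ _ step _ ih =>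
    have hik : i ≠ k := fun hik ↦ hi (hik ▸ step.mem_support)
    exact List.not_mem_cons_of_ne_of_not_mem hik (ih (step.2.1 i hik ▸ hi))

/-- Some schedule of chip moves in which every chip moves at most once takes the chips from `c` to
the positions `τ`. The chips are unlabeled: any permutation of `τ` may be reached. -/
def MonotoneReconfigurable (G : SimpleGraph V) (c τ : ι → V) : Prop :=
  ∃ (σ : Equiv.Perm ι) (l : List ι), l.Nodup ∧ Schedule (ChipMove G) l c (τ ∘ σ)

namespace MonotoneReconfigurable

variable {c τ : ι → V}

theorem refl (G : SimpleGraph V) (c : ι → V) : MonotoneReconfigurable G c c :=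
  ⟨1, [], List.nodup_nil, .nil c⟩

theorem mono (hGH : G ≤ H) (h : MonotoneReconfigurable G c τ) : MonotoneReconfigurable H c τ := by
  obtain ⟨σ, l, hl, hsched⟩ := h
  exact ⟨σ, l, hl, by simpa using hsched.map id id fun _ _ _ ↦ ChipMove.mono hGH⟩

theorem symm (h : MonotoneReconfigurable G c τ) : MonotoneReconfigurable G τ c := by
  obtain ⟨σ, l, hl, hsched⟩ := h
  refine ⟨σ.symm, l.reverse.map σ, (List.nodup_reverse.2 hl).map σ.injective, ?_⟩
  have reversed : Schedule (ChipMove G) l.reverse (τ ∘ σ) c :=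
    hsched.reverse fun _ _ _ ↦ ChipMove.symm
  simpa [Function.comp_assoc] using
    reversed.map σ (· ∘ σ.symm) fun _ _ _ step ↦ step.relabel σ

theorem of_comp_perm (ρ : Equiv.Perm ι) (h : MonotoneReconfigurable G c (τ ∘ ρ)) :
    MonotoneReconfigurable G c τ := by
  obtain ⟨σ, l, hl, hsched⟩ := h
  exact ⟨ρ * σ, l, hl, hsched⟩

theorem of_chipMove {i : ι} {c₁ : ι → V} (hHG : H ≤ G) (step : ChipMove G i c c₁)
    (hi : c₁ i ∉ H.support) (h : MonotoneReconfigurable H c₁ τ) :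
    MonotoneReconfigurable G c τ := by
  obtain ⟨σ, l, hl, hsched⟩ := h
  refine ⟨σ, i :: l, List.nodup_cons.2 ⟨notMem_of_schedule_chipMove hsched hi, hl⟩, ?_⟩
  exact .cons step (by simpa using hsched.map id id fun _ _ _ ↦ ChipMove.mono hHG)

end MonotoneReconfigurable

theorem reachable_comp_swap [DecidableEq ι] {c τ : ι → V} (h : ∀ k, G.Reachable (c k) (τ k))
    {i j : ι} (hij : G.Reachable (c i) (τ j)) (k : ι) :
    G.Reachable (c k) ((τ ∘ Equiv.swap i j) k) := by
  rw [Function.comp_apply, Equiv.swap_apply_def]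
  split_ifs with hki hkj
  · exact hki ▸ hij
  · exact hkj ▸ (h j).trans (hij.symm.trans (h i))
  · exact h k

theorem IsNonCutVertex.reachable_deleteIncidenceSet {c τ : ι → V} {v : V} (hv : IsNonCutVertex G v)
    (hreach : ∀ k, G.Reachable (c k) (τ k)) (hiff : ∀ k, c k = v ↔ τ k = v) (k : ι) :
    (G.deleteIncidenceSet v).Reachable (c k) (τ k) := by
  by_cases hk : c k = v
  · rw [hk, (hiff k).1 hk]
  · exact hv hk (mt (hiff k).2 hk) (hreach k)

theorem eq_iff_eq_of_injective {c τ : ι → V} (hc : c.Injective) (hτ : τ.Injective) {i : ι} {v : V}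
    (hci : c i = v) (hτi : τ i = v) (k : ι) : c k = v ↔ τ k = v := by
  rw [← hci, hc.eq_iff, hci, ← hτi, hτ.eq_iff]

theorem exists_chipMove_apply_eq {c : ι → V} (hc : c.Injective) {v : V} (hvc : v ∉ Set.range c)
    {i₀ : ι} (hreach : G.Reachable (c i₀) v) : ∃ i c', ChipMove G i c c' ∧ c' i = v := by
  classical
  obtain ⟨p⟩ := hreach
  obtain ⟨_, ⟨i, rfl⟩, q, hq⟩ := exists_walk_forall_mem_support_eq (A := Set.range c) p
    ⟨c i₀, p.start_mem_support, i₀, rfl⟩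
  have hvi : Function.update c i v i = v := Function.update_self i v c
  refine ⟨i, Function.update c i v, ⟨fun h ↦ hvc ⟨i, h.symm.trans hvi⟩,
    fun j hj ↦ Function.update_of_ne hj v c, q.copy rfl hvi.symm, fun j hj hjq ↦ ?_⟩, hvi⟩
  rw [SimpleGraph.Walk.support_copy] at hjq
  exact hj (hc (hq _ hjq ⟨j, rfl⟩))

/-- On `G`, reachability of the targets suffices for moving chips with labels in `ι` monotonically
to the target positions. -/
def HasMonotoneReconfiguration (ι : Type*) (G : SimpleGraph V) : Prop :=
  ∀ ⦃c τ : ι → V⦄, c.Injective → τ.Injective → (∀ k, G.Reachable (c k) (τ k)) →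
    MonotoneReconfigurable G c τ

namespace HasMonotoneReconfiguration

variable {c τ : ι → V} {v : V}

theorem deleteIncidenceSet_of_mem_range
    (h : HasMonotoneReconfiguration ι (G.deleteIncidenceSet v)) (hv : IsNonCutVertex G v)
    (hc : c.Injective) (hτ : τ.Injective) (hreach : ∀ k, G.Reachable (c k) (τ k))
    (hvc : v ∈ Set.range c) (hvτ : v ∈ Set.range τ) :
    MonotoneReconfigurable (G.deleteIncidenceSet v) c τ := by
  classical
  obtain ⟨i, hi⟩ := hvc
  obtain ⟨j, hj⟩ := hvτ
  have hτ' : (τ ∘ Equiv.swap i j).Injective := hτ.comp (Equiv.injective _)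
  have hτi : (τ ∘ Equiv.swap i j) i = v := by simpa using hj
  refine .of_comp_perm (Equiv.swap i j) (h hc hτ' (hv.reachable_deleteIncidenceSet ?_ ?_))
  · exact reachable_comp_swap hreach (hi.trans hj.symm ▸ .rfl)
  · exact eq_iff_eq_of_injective hc hτ' hi hτi

theorem of_notMem_range_of_mem_range
    (h : HasMonotoneReconfiguration ι (G.deleteIncidenceSet v)) (hv : IsNonCutVertex G v)
    (hc : c.Injective) (hτ : τ.Injective) (hreach : ∀ k, G.Reachable (c k) (τ k))
    (hvc : v ∉ Set.range c) (hvτ : v ∈ Set.range τ) : MonotoneReconfigurable G c τ := by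
  obtain ⟨i₀, hi₀⟩ := hvτ
  obtain ⟨i, c₁, step, hc₁i⟩ := exists_chipMove_apply_eq hc hvc (hi₀ ▸ hreach i₀)
  have v_isolated : v ∉ (G.deleteIncidenceSet v).support := fun hmem ↦
    (G.support_deleteIncidenceSet_subset v hmem).2 rfl
  refine .of_chipMove (G.deleteIncidenceSet_le v) step (hc₁i ▸ v_isolated) ?_
  exact h.deleteIncidenceSet_of_mem_range hv (step.injective hc) hτ
    (fun k ↦ (step.reachable k).symm.trans (hreach k)) ⟨i, hc₁i⟩ ⟨i₀, hi₀⟩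

theorem of_deleteIncidenceSet
    (h : HasMonotoneReconfiguration ι (G.deleteIncidenceSet v)) (hv : IsNonCutVertex G v) :
    HasMonotoneReconfiguration ι G := by
  intro c τ hc hτ hreach
  by_cases hvc : v ∈ Set.range c <;> by_cases hvτ : v ∈ Set.range τ
  · exact (h.deleteIncidenceSet_of_mem_range hv hc hτ hreach hvc hvτ).mono
      (G.deleteIncidenceSet_le v)
  · exact (h.of_notMem_range_of_mem_range hv hτ hc (fun k ↦ (hreach k).symm) hvτ hvc).symm
  · exact h.of_notMem_range_of_mem_range hv hc hτ hreach hvc hvτ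
  · have hiff (k : ι) : c k = v ↔ τ k = v :=
      iff_of_false (fun hk ↦ hvc ⟨k, hk⟩) (fun hk ↦ hvτ ⟨k, hk⟩)
    exact (h hc hτ (hv.reachable_deleteIncidenceSet hreach hiff)).mono (G.deleteIncidenceSet_le v)

theorem bot (ι V : Type*) : HasMonotoneReconfiguration ι (⊥ : SimpleGraph V) := by
  intro c τ _ _ hreach
  obtain rfl : c = τ := funext fun k ↦ SimpleGraph.reachable_bot.1 (hreach k)
  exact .refl _ c

theorem of_support_subset (W : Finset V) (hGW : G.support ⊆ W) :
    HasMonotoneReconfiguration ι G := by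
  classical
  induction W using Finset.strongInduction generalizing G with
  | H W ih =>
    rcases eq_or_ne G ⊥ with rfl | hG
    · exact bot ι V
    obtain ⟨v, hvG, hv⟩ := exists_mem_support_isNonCutVertex (W.finite_toSet.subset hGW) hG
    refine of_deleteIncidenceSet (ih (W.erase v) (W.erase_ssubset (hGW hvG)) ?_) hv
    rw [Finset.coe_erase]
    exact (G.support_deleteIncidenceSet_subset v).trans (Set.sdiff_subset_sdiff_left hGW)

end HasMonotoneReconfiguration

theorem hasMonotoneReconfiguration [Finite ι] (G : SimpleGraph V) :
    HasMonotoneReconfiguration ι G := by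
  intro c τ hc hτ hreach
  obtain ⟨W, hW⟩ := exists_finset_reachable hreach
  refine (HasMonotoneReconfiguration.of_support_subset W ?_ hc hτ hW).mono
    (G.spanningCoe_induce_le W)
  rw [SimpleGraph.support_spanningCoe]
  exact Subtype.coe_image_subset _ _

end Graph

section UnitSquares

variable {C : Set (ℤ × ℤ)} {x y : ℝ × ℝ} {a b m : ℤ × ℤ}

theorem mem_interior_cell {p : ℝ × ℝ} :
    p ∈ interior (cell x) ↔ p ∈ Set.Ioo x.1 (x.1 + 1) ×ˢ Set.Ioo x.2 (x.2 + 1) := by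
  rw [cell, interior_prod_eq, interior_Icc, interior_Icc]

theorem real_prod_dist_lt_one_iff :
    dist x y < 1 ↔ (x.1 < y.1 + 1 ∧ y.1 < x.1 + 1) ∧ x.2 < y.2 + 1 ∧ y.2 < x.2 + 1 := by
  simp only [Prod.dist_eq, sup_lt_iff, Real.dist_eq, abs_sub_lt_iff, sub_lt_iff_lt_add']

theorem interior_cell_inter_cell_nonempty_iff :
    (interior (cell x) ∩ cell y).Nonempty ↔ dist x y < 1 := by
  rw [real_prod_dist_lt_one_iff]
  constructor
  · rintro ⟨p, hpx, hpy⟩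
    obtain ⟨⟨_, _⟩, _, _⟩ := mem_interior_cell.1 hpx
    obtain ⟨⟨_, _⟩, _, _⟩ := hpy
    refine ⟨⟨?_, ?_⟩, ?_, ?_⟩ <;> linarith
  · rintro ⟨⟨_, _⟩, _, _⟩
    refine ⟨((x.1 + y.1 + 1) / 2, (x.2 + y.2 + 1) / 2), mem_interior_cell.2 ⟨⟨?_, ?_⟩, ?_, ?_⟩,
      ⟨?_, ?_⟩, ?_, ?_⟩ <;> dsimp only <;> linarith

theorem isometry_toR2 : Isometry toR2 :=
  Isometry.of_dist_eq fun a b ↦ by simp only [toR2, Prod.dist_eq, Int.dist_cast_real]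

theorem toR2_injective : Function.Injective toR2 :=
  isometry_toR2.injective

theorem eq_of_dist_toR2_lt_one (h : dist (toR2 a) (toR2 b) < 1) : a = b := by
  rw [isometry_toR2.dist_eq, Prod.dist_eq, sup_lt_iff] at h
  exact Prod.ext (Int.pairwise_one_le_dist.eq h.1.not_ge) (Int.pairwise_one_le_dist.eq h.2.not_ge)

theorem exists_dist_toR2_lt_one (x : ℝ × ℝ) : ∃ m : ℤ × ℤ, dist x (toR2 m) < 1 := by
  refine ⟨(⌊x.1⌋, ⌊x.2⌋), real_prod_dist_lt_one_iff.2 ⟨⟨Int.lt_floor_add_one _, ?_⟩,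
    Int.lt_floor_add_one _, ?_⟩⟩
  · exact (Int.floor_le x.1).trans_lt (lt_add_one _)
  · exact (Int.floor_le x.2).trans_lt (lt_add_one _)

/-- The region covered by the cells at the grid points of `C`: the domain `D` in which the squares
move. -/
def cellUnion (C : Set (ℤ × ℤ)) : Set (ℝ × ℝ) := ⋃ c ∈ C, cell (toR2 c)

theorem cell_toR2_subset_cellUnion (ha : a ∈ C) : cell (toR2 a) ⊆ cellUnion C :=
  Set.subset_biUnion_of_mem (u := fun c ↦ cell (toR2 c)) ha

theorem mem_of_cell_subset_cellUnion (hx : cell x ⊆ cellUnion C) (hm : dist x (toR2 m) < 1) :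
    m ∈ C := by
  obtain ⟨p, hpm, hpx⟩ := interior_cell_inter_cell_nonempty_iff.2 ((dist_comm _ _).trans_lt hm)
  obtain ⟨c, hc, hpc⟩ := Set.mem_iUnion₂.1 (hx hpx)
  have hmc : m = c :=
    eq_of_dist_toR2_lt_one (interior_cell_inter_cell_nonempty_iff.1 ⟨p, hpm, hpc⟩)
  exact hmc ▸ hc

/-- The square grid graph on the grid points of `C`. Its vertex type is all of `ℤ × ℤ`; points
outside `C` are isolated vertices. -/
noncomputable def gridGraph (C : Set (ℤ × ℤ)) : SimpleGraph (ℤ × ℤ) :=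
  ((SimpleGraph.hasse (ℤ × ℤ)).induce C).spanningCoe

theorem gridGraph_adj :
    (gridGraph C).Adj a b ↔ (SimpleGraph.hasse (ℤ × ℤ)).Adj a b ∧ a ∈ C ∧ b ∈ C := by
  constructor
  · rintro ⟨-, ⟨a, ha⟩, ⟨b, hb⟩, hab, rfl, rfl⟩
    exact ⟨hab, ha, hb⟩
  · rintro ⟨hab, ha, hb⟩
    exact ⟨hab.ne, ⟨a, ha⟩, ⟨b, hb⟩, hab, rfl, rfl⟩

theorem hasse_int_adj_of_ne {k l : ℤ} {t : ℝ} (hne : k ≠ l) (hk : t < k + 1 ∧ k < t + 1)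
    (hl : t < l + 1 ∧ l < t + 1) : (SimpleGraph.hasse ℤ).Adj k l := by
  have hkl : (k : ℝ) < l + 2 := by linarith
  have hlk : (l : ℝ) < k + 2 := by linarith
  norm_cast at hkl hlk
  rw [SimpleGraph.hasse_adj, Order.covBy_iff_add_one_eq, Order.covBy_iff_add_one_eq]
  lia

theorem reachable_gridGraph_of_cell_subset (hx : cell x ⊆ cellUnion C)
    (ha : dist x (toR2 a) < 1) (hb : dist x (toR2 b) < 1) : (gridGraph C).Reachable a b := by
  have ha' := real_prod_dist_lt_one_iff.1 ha
  have hb' := real_prod_dist_lt_one_iff.1 hb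
  have haC : a ∈ C := mem_of_cell_subset_cellUnion hx ha
  have hbC : b ∈ C := mem_of_cell_subset_cellUnion hx hb
  have cornerC : (a.1, b.2) ∈ C :=
    mem_of_cell_subset_cellUnion hx (real_prod_dist_lt_one_iff.2 ⟨ha'.1, hb'.2⟩)
  have a_corner : (gridGraph C).Reachable a (a.1, b.2) := by
    by_cases h : a.2 = b.2
    · rw [← h]
    · refine (gridGraph_adj.2 ⟨?_, haC, cornerC⟩).reachable
      rw [SimpleGraph.hasse_prod, SimpleGraph.boxProd_adj]
      exact .inr ⟨hasse_int_adj_of_ne h ha'.2 hb'.2, rfl⟩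
  have corner_b : (gridGraph C).Reachable (a.1, b.2) b := by
    by_cases h : a.1 = b.1
    · rw [h]
    · refine (gridGraph_adj.2 ⟨?_, cornerC, hbC⟩).reachable
      rw [SimpleGraph.hasse_prod, SimpleGraph.boxProd_adj]
      exact .inl ⟨hasse_int_adj_of_ne h ha'.1 hb'.1, rfl⟩
  exact a_corner.trans corner_b

theorem reachable_gridGraph_of_isPreconnected {s : Set (ℝ × ℝ)} (hs : IsPreconnected s)
    (hsC : ∀ z ∈ s, cell z ⊆ cellUnion C) (hx : x ∈ s) (hy : y ∈ s)
    (ha : dist x (toR2 a) < 1) (hb : dist y (toR2 b) < 1) : (gridGraph C).Reachable a b := by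
  refine hs.induction₂ (fun x y ↦ ∀ a b, dist x (toR2 a) < 1 → dist y (toR2 b) < 1 →
    (gridGraph C).Reachable a b) ?near ?trans ?symm hx hy a b ha hb
  case near =>
    intro x hx
    obtain ⟨m, hm⟩ := exists_dist_toR2_lt_one x
    have near_m : ∀ᶠ y in 𝓝[s] x, dist y (toR2 m) < 1 :=
      nhdsWithin_le_nhds (Metric.isOpen_ball.mem_nhds hm)
    filter_upwards [near_m, self_mem_nhdsWithin] with y hym hy a b ha hb
    exact (reachable_gridGraph_of_cell_subset (hsC x hx) ha hm).trans
      (reachable_gridGraph_of_cell_subset (hsC y hy) hym hb)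
  case trans =>
    intro x y z _ _ _ hxy hyz a b ha hb
    obtain ⟨m, hm⟩ := exists_dist_toR2_lt_one y
    exact (hxy a m ha hm).trans (hyz m b hm hb)
  case symm =>
    exact fun x y _ _ hxy a b ha hb ↦ (hxy b a hb ha).symm

theorem MoveOf.reachable_gridGraph {n : ℕ} {i : Fin n} {c c' : Fin n → ℝ × ℝ}
    (h : MoveOf n (cellUnion C) i c c') (ha : dist (c i) (toR2 a) < 1)
    (hb : dist (c' i) (toR2 b) < 1) : (gridGraph C).Reachable a b := by
  obtain ⟨-, γ, hγ, h₀, h₁, hfree⟩ := h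
  refine reachable_gridGraph_of_isPreconnected (isPreconnected_Icc.image γ hγ) ?_
    ⟨0, Set.left_mem_Icc.2 zero_le_one, h₀⟩ ⟨1, Set.right_mem_Icc.2 zero_le_one, h₁⟩ ha hb
  rintro _ ⟨u, hu, rfl⟩
  exact (hfree u hu).1

theorem reachable_gridGraph_of_reflTransGen_move {n : ℕ} {c c' : Fin n → ℝ × ℝ}
    (h : Relation.ReflTransGen (Move n (cellUnion C)) c c') {i : Fin n} (ha : c i = toR2 a)
    (hb : dist (c' i) (toR2 b) < 1) : (gridGraph C).Reachable a b := by
  induction h generalizing b with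
  | refl =>
    rw [ha] at hb
    rw [eq_of_dist_toR2_lt_one hb]
  | @tail c₁ c₂ _ hmove ih =>
    obtain ⟨k, hk⟩ := hmove
    rcases eq_or_ne i k with rfl | hik
    · obtain ⟨m, hm⟩ := exists_dist_toR2_lt_one (c₁ i)
      exact (ih hm).trans (hk.reachable_gridGraph hm hb)
    · exact ih (hk.1 i hik ▸ hb)

theorem Icc_add_one_subset_union {s t : ℝ} (hst : s ≤ t) (hts : t ≤ s + 1) :
    Set.Icc t (t + 1) ⊆ Set.Icc s (s + 1) ∪ Set.Icc (s + 1) (s + 1 + 1) := by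
  rw [Set.Icc_union_Icc_eq_Icc (by linarith) (by linarith)]
  exact Set.Icc_subset_Icc hst (by linarith)

theorem cell_subset_of_mem_segment_of_covBy (hab : a ⋖ b)
    (hx : x ∈ segment ℝ (toR2 a) (toR2 b)) : cell x ⊆ cell (toR2 a) ∪ cell (toR2 b) := by
  obtain ⟨hx₁, hx₂⟩ := Prod.segment_subset _ _ hx
  obtain ⟨a₁, a₂⟩ := a
  obtain ⟨b₁, b₂⟩ := b
  simp only [toR2] at hx₁ hx₂
  simp only [Prod.covBy_iff, Order.covBy_iff_add_one_eq] at hab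
  rcases hab with ⟨rfl, rfl⟩ | ⟨rfl, rfl⟩
  · rw [Int.cast_add, Int.cast_one, segment_eq_Icc (by linarith)] at hx₁
    rw [segment_same, Set.mem_singleton_iff] at hx₂
    simp only [cell, toR2, Int.cast_add, Int.cast_one, hx₂, ← Set.union_prod]
    exact Set.prod_mono_left (Icc_add_one_subset_union hx₁.1 hx₁.2)
  · rw [Int.cast_add, Int.cast_one, segment_eq_Icc (by linarith)] at hx₂
    rw [segment_same, Set.mem_singleton_iff] at hx₁
    simp only [cell, toR2, Int.cast_add, Int.cast_one, hx₁, ← Set.prod_union]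
    exact Set.prod_mono_right (Icc_add_one_subset_union hx₂.1 hx₂.2)

theorem cell_subset_cellUnion_pair (hab : (SimpleGraph.hasse (ℤ × ℤ)).Adj a b)
    (hx : x ∈ segment ℝ (toR2 a) (toR2 b)) : cell x ⊆ cellUnion {a, b} := by
  rw [cellUnion, Set.biUnion_pair]
  rcases hab with hab | hba
  · exact cell_subset_of_mem_segment_of_covBy hab hx
  · rw [Set.union_comm]
    exact cell_subset_of_mem_segment_of_covBy hba (segment_symm ℝ (toR2 a) (toR2 b) ▸ hx)

/-- The positions that a unit square can take inside the cells of `C` without overlapping the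
squares at the grid points of `B`. -/
def freePositions (C B : Set (ℤ × ℤ)) : Set (ℝ × ℝ) :=
  {x | cell x ⊆ cellUnion C ∧ ∀ b ∈ B, interior (cell x) ∩ cell (toR2 b) = ∅}

theorem mem_freePositions_of_cell_subset {A B : Set (ℤ × ℤ)} (hx : cell x ⊆ cellUnion A)
    (hAC : A ⊆ C) (hAB : Disjoint A B) : x ∈ freePositions C B := by
  refine ⟨hx.trans (Set.biUnion_subset_biUnion_left hAC), fun b hb ↦ ?_⟩
  refine Set.not_nonempty_iff_eq_empty.1 fun hne ↦ hAB.notMem_of_mem_right hb ?_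
  exact mem_of_cell_subset_cellUnion hx (interior_cell_inter_cell_nonempty_iff.1 hne)

theorem joinedIn_freePositions_of_adj {B : Set (ℤ × ℤ)} (hab : (gridGraph C).Adj a b)
    (ha : a ∉ B) (hb : b ∉ B) : JoinedIn (freePositions C B) (toR2 a) (toR2 b) := by
  obtain ⟨hadj, haC, hbC⟩ := gridGraph_adj.1 hab
  refine JoinedIn.of_segment_subset fun x hx ↦ ?_
  exact mem_freePositions_of_cell_subset (cell_subset_cellUnion_pair hadj hx)
    (Set.pair_subset haC hbC) (by simp [ha, hb])

theorem joinedIn_freePositions_of_walk {B : Set (ℤ × ℤ)} (p : (gridGraph C).Walk a b)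
    (ha : a ∈ C) (hp : ∀ v ∈ p.support, v ∉ B) :
    JoinedIn (freePositions C B) (toR2 a) (toR2 b) := by
  induction p with
  | @nil u =>
    refine JoinedIn.refl (mem_freePositions_of_cell_subset (A := {u})
      (cell_toR2_subset_cellUnion rfl) (Set.singleton_subset_iff.2 ha) ?_)
    exact Set.disjoint_singleton_left.2 (hp u (List.mem_singleton_self u))
  | cons hadj q ih =>
    rw [SimpleGraph.Walk.support_cons, List.forall_mem_cons] at hp
    exact (joinedIn_freePositions_of_adj hadj hp.1 (hp.2 _ q.start_mem_support)).trans
      (ih (gridGraph_adj.1 hadj).2.2 hp.2)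

theorem ChipMove.moveOf {n : ℕ} {i : Fin n} {c c' : Fin n → ℤ × ℤ}
    (h : ChipMove (gridGraph C) i c c') :
    MoveOf n (cellUnion C) i (toR2 ∘ c) (toR2 ∘ c') := by
  obtain ⟨v, hv⟩ := h.mem_support
  obtain ⟨-, hstay, p, hp⟩ := h
  obtain ⟨γ, hγ⟩ := joinedIn_freePositions_of_walk (B := c '' {i}ᶜ) p (gridGraph_adj.1 hv).2.1 <| by
    rintro _ hvp ⟨j, hj, rfl⟩
    exact hp j hj hvp
  refine ⟨fun j hj ↦ congrArg toR2 (hstay j hj), γ.extend, γ.continuous_extend.continuousOn,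
    γ.extend_zero, γ.extend_one, fun u hu ↦ ?_⟩
  rw [γ.extend_apply hu]
  exact ⟨(hγ ⟨u, hu⟩).1, fun j hj ↦ (hγ ⟨u, hu⟩).2 _ ⟨j, hj, rfl⟩⟩

theorem exists_eq_toR2_comp {n : ℕ} {T : Finset (ℤ × ℤ)} (hT : T.card = n)
    {x : Fin n → ℝ × ℝ} (hx : ∀ v, v ∈ T ↔ ∃ i, x i = toR2 v) :
    ∃ f : Fin n → ℤ × ℤ, f.Injective ∧ x = toR2 ∘ f := by
  choose g hg using fun v : T ↦ (hx v).1 v.2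
  have g_injective : g.Injective := fun v w hvw ↦
    Subtype.ext (toR2_injective ((hg v).symm.trans (hvw ▸ hg w)))
  have g_bijective : g.Bijective :=
    (Fintype.bijective_iff_injective_and_card g).2 ⟨g_injective, by simp [hT]⟩
  let g' := Equiv.ofBijective g g_bijective
  refine ⟨fun i ↦ g'.symm i, Subtype.val_injective.comp g'.symm.injective, funext fun i ↦ ?_⟩
  calc x i = x (g (g'.symm i)) := congrArg x (g'.apply_symm_apply i).symm
    _ = toR2 (g'.symm i) := hg _

theorem Schedule.exists_fin_sequence_moveOf {n : ℕ} {l : List (Fin n)} {c c' : Fin n → ℤ × ℤ}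
    (h : Schedule (ChipMove (gridGraph C)) l c c') :
    ∃ cs : Fin (l.length + 1) → Fin n → ℝ × ℝ,
      cs 0 = toR2 ∘ c ∧ cs (Fin.last l.length) = toR2 ∘ c' ∧
        ∀ k : Fin l.length, MoveOf n (cellUnion C) (l.get k) (cs k.castSucc) (cs k.succ) := by
  have lifted : Schedule (MoveOf n (cellUnion C)) l (toR2 ∘ c) (toR2 ∘ c') := by
    simpa using h.map id (toR2 ∘ ·) fun _ _ _ step ↦ step.moveOf
  exact lifted.exists_fin_sequence

end UnitSquares

theorem unlabeled_unit_square_monotone_schedule_exists_general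
    (C : Set (ℤ × ℤ)) (S T : Finset (ℤ × ℤ)) (n : ℕ) (hT : T.card = n)
    (hexists : ∃ (e : Fin n → ℤ × ℤ) (final : Fin n → ℝ × ℝ),
      Function.Injective e ∧ (∀ v : ℤ × ℤ, v ∈ S ↔ ∃ i : Fin n, e i = v) ∧
      Relation.ReflTransGen (Move n (cellUnion C)) (fun i => toR2 (e i)) final ∧
      (∀ v : ℤ × ℤ, v ∈ T ↔ ∃ i : Fin n, final i = toR2 v)) :
    ∃ (e : Fin n → ℤ × ℤ) (final : Fin n → ℝ × ℝ),
      Function.Injective e ∧ (∀ v : ℤ × ℤ, v ∈ S ↔ ∃ i : Fin n, e i = v) ∧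
      (∀ v : ℤ × ℤ, v ∈ T ↔ ∃ i : Fin n, final i = toR2 v) ∧
      ∃ (N : ℕ) (cs : Fin (N + 1) → Fin n → ℝ × ℝ) (idx : Fin N → Fin n),
        Function.Injective idx ∧
        cs 0 = (fun i => toR2 (e i)) ∧
        cs (Fin.last N) = final ∧
        ∀ k : Fin N, MoveOf n (cellUnion C) (idx k) (cs k.castSucc) (cs k.succ) := by
  obtain ⟨e, final, he, heS, hmoves, hfinal⟩ := hexists
  obtain ⟨f, hf, rfl⟩ := exists_eq_toR2_comp hT hfinal
  have hreach (i : Fin n) : (gridGraph C).Reachable (e i) (f i) :=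
    reachable_gridGraph_of_reflTransGen_move hmoves rfl ((dist_self _).trans_lt one_pos)
  obtain ⟨σ, l, hl, hsched⟩ := hasMonotoneReconfiguration (gridGraph C) he hf hreach
  obtain ⟨cs, hstart, hend, hsteps⟩ := hsched.exists_fin_sequence_moveOf
  exact ⟨e, toR2 ∘ f ∘ σ, he, heS,
    fun v ↦ (hfinal v).trans σ.surjective.exists,
    l.length, cs, l.get, List.nodup_iff_injective_get.1 hl, hstart, hend, hsteps⟩

/-- For unlabeled unit squares in `D = ⋃_{c ∈ C} cell c`: if any valid movement schedule
reconfigures the squares from the points of `S` to occupy exactly the cells of `T`, then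
there is a valid movement schedule doing so in which each square moves at most once. -/
theorem unlabeled_unit_square_monotone_schedule_exists
    (C : Finset (ℤ × ℤ)) (D : Set (ℝ × ℝ)) (hD : D = ⋃ c ∈ C, cell (toR2 c))
    (S T : Finset (ℤ × ℤ)) (hSC : S ⊆ C) (hTC : T ⊆ C)
    (n : ℕ) (hS : S.card = n) (hT : T.card = n)
    (hexists : ∃ (e : Fin n → ℤ × ℤ) (final : Fin n → ℝ × ℝ),
      Function.Injective e ∧ (∀ v : ℤ × ℤ, v ∈ S ↔ ∃ i : Fin n, e i = v) ∧
      Relation.ReflTransGen (Move n D) (fun i => toR2 (e i)) final ∧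
      (∀ v : ℤ × ℤ, v ∈ T ↔ ∃ i : Fin n, final i = toR2 v)) :
    ∃ (e : Fin n → ℤ × ℤ) (final : Fin n → ℝ × ℝ),
      Function.Injective e ∧ (∀ v : ℤ × ℤ, v ∈ S ↔ ∃ i : Fin n, e i = v) ∧
      (∀ v : ℤ × ℤ, v ∈ T ↔ ∃ i : Fin n, final i = toR2 v) ∧
      ∃ (N : ℕ) (cs : Fin (N + 1) → Fin n → ℝ × ℝ) (idx : Fin N → Fin n),
        Function.Injective idx ∧
        cs 0 = (fun i => toR2 (e i)) ∧
        cs (Fin.last N) = final ∧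
        ∀ k : Fin N, MoveOf n D (idx k) (cs k.castSucc) (cs k.succ) := by
  subst hD
  exact unlabeled_unit_square_monotone_schedule_exists_general (C : Set (ℤ × ℤ)) S T n hT hexists
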